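/- arXiv:1405.2615 — 4 statements merged into one kernel-verified Lean document; each statement's English description precedes it below -/
import Mathlib

section
/- Let m be a positive integer and n a positive even integer. Let à be the complex matrix whose rows and columns are indexed by the vertices (a,b) of the m-by-n grid (1 ≤ a ≤ m, 1 ≤ b ≤ n), with entry Ã[(a,b),(c,d)] equal to 1 if b = d and |a − c| = 1 (a horizontal edge), equal to i if a = c and |b − d| = 1 (a vertical edge), and equal to 0 otherwise. Then det à = N(m,n)², where N(m,n) is the number of perfect matchings of the m-by-n grid graph; in particular det à is a nonnegative real number. -/
open Complex

/-- The m-by-n grid graph on vertex set `Fin m × Fin n`: two vertices are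
adjacent iff they differ by exactly 1 in one coordinate and agree in the other. -/
def gridGraph (m n : ℕ) : SimpleGraph (Fin m × Fin n) :=
  SimpleGraph.fromRel (fun p q =>
    (p.1 = q.1 ∧ p.2.val + 1 = q.2.val) ∨ (p.2 = q.2 ∧ p.1.val + 1 = q.1.val))

/-- The number of perfect matchings of a graph. -/
noncomputable def numPerfectMatchings {V : Type*} (G : SimpleGraph V) : ℕ :=
  {M : G.Subgraph | M.IsPerfectMatching}.ncard

/-- Kasteleyn's weighted adjacency matrix of the m-by-n grid graph: the entry
indexed by vertices (a,b), (c,d) is 1 if b = d and |a - c| = 1 (horizontal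
edge), is i if a = c and |b - d| = 1 (vertical edge), and is 0 otherwise. -/
def kasteleynMatrix (m n : ℕ) : Matrix (Fin m × Fin n) (Fin m × Fin n) ℂ :=
  fun p q =>
    if p.2 = q.2 ∧ (p.1.val + 1 = q.1.val ∨ q.1.val + 1 = p.1.val) then 1
    else if p.1 = q.1 ∧ (p.2.val + 1 = q.2.val ∨ q.2.val + 1 = p.2.val) then Complex.I
    else 0

namespace Kast
open Finset

/-- sign of `y - x` -/
def g {α : Type*} [LinearOrder α] (x y : α) : ℤ := if x < y then 1 else -1

section general
variable {α : Type*} [LinearOrder α]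

lemma g_sq (x y : α) : g x y * g x y = 1 := by unfold g; split_ifs <;> norm_num

lemma g_anti {x y : α} (h : x ≠ y) : g x y = - g y x := by
  unfold g
  rcases lt_or_gt_of_ne h with h | h
  · simp [h, h.not_gt]
  · simp [h, h.not_gt]

/-- ordered pairs inside a set -/
def PP (B : Finset α) : Finset (α × α) := (B ×ˢ B).filter (fun p => p.1 < p.2)

lemma prod_PP (B : Finset α) (h : α → α → ℤ) :
    ∏ p ∈ PP B, (h p.1 p.2 * h p.2 p.1) = ∏ p ∈ B.offDiag, h p.1 p.2 := by
  have e : B.offDiag = PP B ∪ (PP B).image Prod.swap := by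
    ext ⟨x, y⟩
    simp only [PP, mem_offDiag, mem_union, mem_filter, mem_product, mem_image, Prod.exists,
      Prod.swap_prod_mk, Prod.mk.injEq]
    constructor
    · rintro ⟨hx, hy, hne⟩
      rcases lt_or_gt_of_ne hne with h | h
      · exact Or.inl ⟨⟨hx, hy⟩, h⟩
      · exact Or.inr ⟨y, x, ⟨⟨hy, hx⟩, h⟩, rfl, rfl⟩
    · rintro (⟨⟨hx, hy⟩, h⟩ | ⟨a, b, ⟨⟨ha, hb⟩, h⟩, rfl, rfl⟩)
      · exact ⟨hx, hy, h.ne⟩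
      · exact ⟨hb, ha, h.ne'⟩
  rw [e, prod_union, prod_image, prod_mul_distrib]
  · simp
  · exact Prod.swap_injective.injOn
  · rw [Finset.disjoint_left]
    rintro ⟨x, y⟩ h1 h2
    simp only [PP, mem_filter, mem_product, mem_image, Prod.exists,
      Prod.swap_prod_mk, Prod.mk.injEq] at h1 h2
    obtain ⟨a, b, ⟨_, h⟩, rfl, rfl⟩ := h2
    exact absurd h1.2 h.not_gt

/-- four-term product -/
def G (f : α → α) (x y : α) : ℤ := g x y * g (f x) (f y) * (g x (f y) * g (f x) y)

lemma prod_BB (B W : Finset α) (σ : α → α) (hσ : Function.Injective σ)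
    (hBW : B.image σ = W) (hd : Disjoint B W) :
    ∏ p ∈ PP B, (g p.1 p.2 * g (σ p.1) (σ p.2)) =
      (∏ p ∈ PP B, G σ p.1 p.2) * ((-1) ^ (PP B).card * ((∏ p ∈ B ×ˢ W, g p.1 p.2) *
        ∏ b ∈ B, g b (σ b))) := by
  have h1 : ∏ p ∈ B.offDiag, g p.1 (σ p.2) =
      (∏ p ∈ B ×ˢ W, g p.1 p.2) * ∏ b ∈ B, g b (σ b) := by
    have h2 : ∏ p ∈ B ×ˢ W, g p.1 p.2 = ∏ p ∈ B ×ˢ B, g p.1 (σ p.2) := by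
      rw [prod_product, prod_product]
      refine prod_congr rfl fun x _ => ?_
      rw [← hBW, prod_image hσ.injOn]
    have h3 : ∏ p ∈ B ×ˢ B, g p.1 (σ p.2) =
        (∏ p ∈ B.diag, g p.1 (σ p.2)) * ∏ p ∈ B.offDiag, g p.1 (σ p.2) := by
      rw [← prod_union (disjoint_diag_offDiag B), diag_union_offDiag]
    have h4 : ∏ p ∈ B.diag, g p.1 (σ p.2) = ∏ b ∈ B, g b (σ b) := by
      rw [prod_diag]
    have h5 : (∏ b ∈ B, g b (σ b)) * ∏ b ∈ B, g b (σ b) = 1 := by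
      rw [← prod_mul_distrib]; exact prod_eq_one fun b _ => g_sq _ _
    rw [h2, h3, h4]
    linear_combination -(∏ p ∈ B.offDiag, g p.1 (σ p.2)) * h5
  rw [← h1, ← prod_PP B (fun x y => g x (σ y)), ← prod_const, ← prod_mul_distrib,
    ← prod_mul_distrib]
  refine prod_congr rfl fun p hp => ?_
  simp only [PP, mem_filter, mem_product] at hp
  have hne : σ p.1 ≠ p.2 := by
    intro h
    exact (Finset.disjoint_left.1 hd hp.1.2) (by rw [← hBW, ← h]; exact mem_image_of_mem _ hp.1.1)
  unfold G
  rw [g_anti hne]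
  have a1 := g_sq p.1 (σ p.2)
  have a2 := g_sq p.2 (σ p.1)
  linear_combination (-(g p.1 p.2 * g (σ p.1) (σ p.2)) * (g p.2 (σ p.1) * g p.2 (σ p.1))) * a1 - (g p.1 p.2 * g (σ p.1) (σ p.2)) * a2

lemma prod_BW (B W : Finset α) (σ : α → α) (hσ : Function.Injective σ)
    (hBW : B.image σ = W) (hWB : W.image σ = B) (hd : Disjoint B W) :
    ∏ p ∈ (B ×ˢ W ∪ W ×ˢ B).filter (fun p => p.1 < p.2), (g p.1 p.2 * g (σ p.1) (σ p.2)) =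
      (∏ p ∈ B ×ˢ W, g p.1 p.2) * (∏ p ∈ W ×ˢ B, g p.1 p.2) := by
  have h1 : ∏ p ∈ W ×ˢ B, g p.1 p.2 = ∏ p ∈ B ×ˢ W, g (σ p.1) (σ p.2) := by
    rw [prod_product, prod_product]
    conv_lhs => rw [← hBW, prod_image hσ.injOn]
    refine prod_congr rfl fun x _ => ?_
    conv_lhs => rw [← hWB, prod_image hσ.injOn]
  rw [h1, ← prod_mul_distrib]
  have key : ∀ x y, x ∈ B → y ∈ W → x ≠ y := fun x y hx hy h =>
    (Finset.disjoint_left.1 hd hx) (h ▸ hy)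
  refine prod_bij' (fun p _ => if p.1 ∈ B then p else p.swap)
    (fun p _ => if p.1 < p.2 then p else p.swap) ?_ ?_ ?_ ?_ ?_
  · rintro ⟨x, y⟩ h
    simp only [mem_filter, mem_union, mem_product] at h
    by_cases hx : x ∈ B <;> simp [hx] <;> have := key x x <;> have := key y y <;> grind
  · rintro ⟨x, y⟩ h
    simp only [mem_product] at h
    have := key x y h.1 h.2
    by_cases hx : x < y
    · simp [hx, h]
    · simp [hx, h]; grind
  · rintro ⟨x, y⟩ h
    simp only [mem_filter, mem_union, mem_product] at h
    have := h.2.not_gt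
    by_cases hx : x ∈ B <;> simp [hx, h.2, this]
  · rintro ⟨x, y⟩ h
    simp only [mem_product] at h
    have := key y y
    by_cases hx : x < y
    · simp [hx, h]
    · simp [hx]; grind
  · rintro ⟨x, y⟩ h
    simp only [mem_filter, mem_union, mem_product] at h
    by_cases hx : x ∈ B
    · simp [hx]
    · have h3 := h.2.ne
      simp only [hx, if_false, Prod.fst_swap, Prod.snd_swap]
      rw [g_anti h3, g_anti (hσ.ne h3)]; ring

end general

lemma sign_cross {N : ℕ} (σ : Equiv.Perm (Fin N)) (B W : Finset (Fin N))
    (hBW : B.image σ = W) (hWB : W.image σ = B) (hd : Disjoint B W) (hu : B ∪ W = univ) :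
    (Equiv.Perm.sign σ : ℤ) =
      (∏ p ∈ PP B, G σ p.1 p.2) * (∏ p ∈ PP W, G σ p.1 p.2) * ∏ v, g v (σ v) := by
  have h0 : (Equiv.Perm.sign σ : ℤ) =
      ∏ p ∈ PP (univ : Finset (Fin N)), (g p.1 p.2 * g (σ p.1) (σ p.2)) := by
    rw [Equiv.Perm.sign_eq_prod_prod_Ioi, Finset.prod_sigma', Units.coe_prod]
    refine prod_bij' (fun p _ => (p.1, p.2)) (fun p _ => ⟨p.1, p.2⟩) ?_ ?_ ?_ ?_ ?_
    · simp [PP]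
    · simp [PP]
    · simp
    · simp
    · rintro ⟨x, y⟩ h
      simp at h
      simp only [g, h, if_true]
      split_ifs <;> simp
  have h1 : PP (univ : Finset (Fin N)) =
      (PP B ∪ PP W) ∪ (B ×ˢ W ∪ W ×ˢ B).filter (fun p => p.1 < p.2) := by
    ext ⟨x, y⟩
    have hx := mem_univ x
    have hy := mem_univ y
    rw [← hu, mem_union] at hx hy
    simp only [PP, mem_filter, mem_union, mem_product, mem_univ]
    tauto
  have hdd := Finset.disjoint_left.1 hd
  have d1 : Disjoint (PP B) (PP W) := by
    rw [Finset.disjoint_left]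
    rintro ⟨x, y⟩
    simp only [PP, mem_filter, mem_product]
    have := @hdd x
    tauto
  have d2 : Disjoint (PP B ∪ PP W) ((B ×ˢ W ∪ W ×ˢ B).filter (fun p => p.1 < p.2)) := by
    rw [Finset.disjoint_left]
    rintro ⟨x, y⟩
    simp only [PP, mem_filter, mem_product, mem_union]
    have := @hdd x
    have := @hdd y
    tauto
  have hc : B.card = W.card := by rw [← hBW, card_image_of_injective _ σ.injective]
  have hP : (PP B).card = (PP W).card := by
    have e1 := prod_PP B (fun _ _ => 2)
    have e2 := prod_PP W (fun _ _ => 2)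
    simp only [prod_const, offDiag_card, hc] at e1 e2
    rw [← e2] at e1
    exact Int.pow_right_injective (by norm_num) e1
  have hv : ∏ v, g v (σ v) = (∏ b ∈ B, g b (σ b)) * ∏ b ∈ W, g b (σ b) := by
    rw [← hu, prod_union hd]
  rw [h0, h1, prod_union d2, prod_union d1, prod_BB B W σ σ.injective hBW hd,
    prod_BB W B σ σ.injective hWB hd.symm, prod_BW B W σ σ.injective hBW hWB hd, hP, hv]
  have q1 : (∏ p ∈ B ×ˢ W, g p.1 p.2) * (∏ p ∈ B ×ˢ W, g p.1 p.2) = 1 := by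
    rw [← prod_mul_distrib]; exact prod_eq_one fun b _ => g_sq _ _
  have q2 : (∏ p ∈ W ×ˢ B, g p.1 p.2) * (∏ p ∈ W ×ˢ B, g p.1 p.2) = 1 := by
    rw [← prod_mul_distrib]; exact prod_eq_one fun b _ => g_sq _ _
  have q3 : ((-1 : ℤ) ^ (PP W).card) * ((-1 : ℤ) ^ (PP W).card) = 1 := by
    rw [← mul_pow]; simp
  generalize (∏ p ∈ B ×ˢ W, g p.1 p.2) = X at *
  generalize (∏ p ∈ W ×ˢ B, g p.1 p.2) = Y at *
  generalize ((-1 : ℤ) ^ (PP W).card) = Z at *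
  generalize (∏ b ∈ B, g b (σ b)) = U
  generalize (∏ b ∈ W, g b (σ b)) = V
  generalize (∏ p ∈ PP B, G σ p.1 p.2) = S
  generalize (∏ p ∈ PP W, G σ p.1 p.2) = T
  calc _ = S * T * (U * V) * (X * X) * (Y * Y) * (Z * Z) := by ring
    _ = _ := by rw [q1, q2, q3]; ring

end Kast

namespace Kast
open Finset

section cross
set_option linter.unusedSectionVars false
variable {α : Type*} [Fintype α] [LinearOrder α]

/-- `y` strictly between `x` and `f x` -/
def Bt (f : α → α) (x y : α) : Prop := (x < y ∧ y < f x) ∨ (f x < y ∧ y < x)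

/-- the edges at `x` and `y` cross -/
def Cr (f : α → α) (x y : α) : Prop := (Bt f x y ∧ ¬ Bt f x (f y)) ∨ (¬ Bt f x y ∧ Bt f x (f y))

instance (f : α → α) (x y : α) : Decidable (Bt f x y) := by unfold Bt; infer_instance
instance (f : α → α) (x y : α) : Decidable (Cr f x y) := by unfold Cr; infer_instance

lemma sum_transversal (f : α → α) (hf : ∀ x, f (f x) = x) (T : Finset α)
    (hT : ∀ x, f x ∈ T ↔ x ∉ T) (h : α → ℕ) (hh : ∀ x, h (f x) = h x) :
    ∑ x, h x = 2 * ∑ x ∈ T, h x := by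
  have h1 : ∑ x ∈ Tᶜ, h x = ∑ x ∈ T, h x := by
    refine sum_bij' (fun x _ => f x) (fun x _ => f x) ?_ ?_ ?_ ?_ ?_
    · intro x hx; rw [mem_compl] at hx; exact (hT x).2 hx
    · intro x hx; rw [mem_compl, hT]; simpa using hx
    · intro x _; exact hf x
    · intro x _; exact hf x
    · intro x _; exact (hh x).symm
  rw [← sum_add_sum_compl T, h1]; ring

lemma card_PP_filter (T : Finset α) (R : α → α → Prop) [∀ x y, Decidable (R x y)]
    (hs : ∀ x y, R x y → R y x) (hi : ∀ x, ¬ R x x) :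
    ∑ x ∈ T, ∑ y ∈ T, (if R x y then 1 else 0) =
      2 * ((PP T).filter (fun p => R p.1 p.2)).card := by
  have e : (T ×ˢ T).filter (fun p => R p.1 p.2) =
      (PP T).filter (fun p => R p.1 p.2) ∪ ((PP T).filter (fun p => R p.1 p.2)).image Prod.swap := by
    ext ⟨x, y⟩
    simp only [PP, mem_union, mem_filter, mem_product, mem_image, Prod.exists,
      Prod.swap_prod_mk, Prod.mk.injEq]
    constructor
    · rintro ⟨⟨hx, hy⟩, hne⟩
      have : x ≠ y := by rintro rfl; exact hi _ hne
      rcases lt_or_gt_of_ne this with h | h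
      · exact Or.inl ⟨⟨⟨hx, hy⟩, h⟩, hne⟩
      · exact Or.inr ⟨y, x, ⟨⟨⟨hy, hx⟩, h⟩, hs _ _ hne⟩, rfl, rfl⟩
    · rintro (⟨⟨⟨hx, hy⟩, h⟩, h'⟩ | ⟨a, b, ⟨⟨⟨ha, hb⟩, h⟩, h'⟩, rfl, rfl⟩)
      · exact ⟨⟨hx, hy⟩, h'⟩
      · exact ⟨⟨hb, ha⟩, hs _ _ h'⟩
  rw [← sum_product', ← card_filter, e, card_union_of_disjoint,
    card_image_of_injective _ Prod.swap_injective]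
  · ring
  · rw [Finset.disjoint_left]
    rintro ⟨x, y⟩ h1 h2
    simp only [PP, mem_filter, mem_product, mem_image, Prod.exists,
      Prod.swap_prod_mk, Prod.mk.injEq] at h1 h2
    obtain ⟨a, b, ⟨⟨_, h⟩, _⟩, rfl, rfl⟩ := h2
    exact absurd h1.1.2 h.not_gt

lemma Cr_inv_right (f : α → α) (hf : ∀ x, f (f x) = x) (x y : α) : Cr f x (f y) ↔ Cr f x y := by
  unfold Cr; rw [hf]; tauto

lemma Cr_inv_left (f : α → α) (hf : ∀ x, f (f x) = x) (x y : α) : Cr f (f x) y ↔ Cr f x y := by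
  have h : ∀ z, Bt f (f x) z ↔ Bt f x z := by
    intro z; unfold Bt; rw [hf]; exact or_comm
  unfold Cr; rw [h, h]

lemma Cr_irrefl (f : α → α) (x : α) : ¬ Cr f x x := by
  unfold Cr Bt; simp

lemma Cr_symm (f : α → α) (hf : ∀ x, f (f x) = x) (x y : α) (h : Cr f x y) : Cr f y x := by
  have h1 : f x ≠ f y := by
    intro h'
    have : x = y := by rw [← hf x, h', hf]
    subst this; exact Cr_irrefl f x h
  have h2 : x ≠ y := fun h' => h1 (congrArg f h')
  have h3 : x ≠ f y := by
    rintro h'; rw [← Cr_inv_right f hf, ← h'] at h; exact Cr_irrefl f x h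
  have h4 : f x ≠ y := by
    rintro h'; rw [← Cr_inv_left f hf, h'] at h; exact Cr_irrefl f y h
  unfold Cr Bt at *
  grind

lemma sum_Cr (f : α → α) (hf : ∀ x, f (f x) = x) (T : Finset α)
    (hT : ∀ x, f x ∈ T ↔ x ∉ T) :
    ∑ x : α, ∑ y : α, (if Cr f x y then 1 else 0) =
      8 * ((PP T).filter (fun p => Cr f p.1 p.2)).card := by
  have h1 := card_PP_filter T (Cr f) (Cr_symm f hf) (Cr_irrefl f)
  have h2 : ∀ x, ∑ y : α, (if Cr f x y then 1 else 0) = 2 * ∑ y ∈ T, (if Cr f x y then 1 else 0) := by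
    intro x
    exact sum_transversal f hf T hT _ (fun y => by simp [Cr_inv_right f hf])
  have h3 := sum_transversal f hf T hT (fun x => ∑ y ∈ T, (if Cr f x y then 1 else 0))
    (fun y => by simp [Cr_inv_left f hf])
  simp_rw [h2]
  rw [← mul_sum, h3, h1]; ring

lemma prod_G_eq (f : α → α) (hf : ∀ x, f (f x) = x) (hne : ∀ x, f x ≠ x) (T : Finset α)
    (hT : ∀ x, f x ∈ T ↔ x ∉ T) :
    ∏ p ∈ PP T, G f p.1 p.2 =
      (-1) ^ ((univ : Finset (α × α)).filter
        (fun p => p.1 < p.2 ∧ p.2 < f p.1 ∧ f p.1 < f p.2)).card := by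
  have hc := sum_Cr f hf T hT
  have hL := sum_Cr f hf (univ.filter (fun x => x < f x)) (by
    intro x; have := hne x; simp [hf]; grind)
  have e : (PP (univ.filter (fun x => x < f x))).filter (fun p => Cr f p.1 p.2) =
      ((univ : Finset (α × α)).filter (fun p => p.1 < p.2 ∧ p.2 < f p.1 ∧ f p.1 < f p.2)) := by
    ext ⟨x, y⟩
    have : f x = f y → x = y := fun h => by rw [← hf x, h, hf]
    simp only [PP, mem_filter, mem_product, mem_univ, true_and]
    unfold Cr Bt
    grind
  rw [← e]
  have e2 : ((PP T).filter (fun p => Cr f p.1 p.2)).card =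
    ((PP (univ.filter (fun x => x < f x))).filter (fun p => Cr f p.1 p.2)).card := by omega
  rw [← e2, ← prod_const, prod_filter]
  refine prod_congr rfl fun p hp => ?_
  obtain ⟨x, y⟩ := p
  simp only [PP, mem_filter, mem_product] at hp
  have h1 : f x ≠ f y := fun h => hp.2.ne (by rw [← hf x, h, hf])
  have h3 : f x ≠ y := by
    intro h; have := (hT x).1; rw [h] at this; exact this hp.1.2 hp.1.1
  have h4 : x ≠ f y := by
    intro h; apply h3; rw [h, hf]
  have h5 := hne x
  have h6 := hne y
  have h7 := hp.2
  simp only [G, g, h7, if_true, one_mul]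
  unfold Cr Bt
  rcases lt_or_gt_of_ne h1 with a1 | a1 <;> rcases lt_or_gt_of_ne h3 with a2 | a2 <;>
    rcases lt_or_gt_of_ne h4 with a3 | a3 <;> simp [a1, a2, a3, a1.not_gt, a2.not_gt, a3.not_gt, h7, h7.not_gt]

end cross
end Kast

namespace Kast
open Finset

section grid
variable {m n : ℕ}

/-- concrete adjacency -/
def Ad (p q : Fin m × Fin n) : Prop :=
  (p.1.val = q.1.val ∧ (p.2.val + 1 = q.2.val ∨ q.2.val + 1 = p.2.val)) ∨
  (p.2.val = q.2.val ∧ (p.1.val + 1 = q.1.val ∨ q.1.val + 1 = p.1.val))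

/-- lexicographic order -/
def lx (p q : Fin m × Fin n) : Prop :=
  p.1.val < q.1.val ∨ (p.1.val = q.1.val ∧ p.2.val < q.2.val)

instance (p q : Fin m × Fin n) : Decidable (lx p q) := by unfold lx; infer_instance

lemma vert_even (f : Fin m × Fin n → Fin m × Fin n) (hf : ∀ p, f (f p) = p)
    (hA : ∀ p, Ad p (f p)) (a : Fin m) (k : ℕ)
    (hk : ∀ b : Fin n, b.val < k → (f (a, b)).1.val = a.val → (f (a, b)).2.val < k) :
    ∑ b ∈ univ.filter (fun b : Fin n => b.val < k ∧ (f (a, b)).1.val = a.val), (1 : ZMod 2) = 0 := by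
  have key : ∀ b : Fin n, (f (a, b)).1.val = a.val → f (a, (f (a, b)).2) = (a, b) := by
    intro b hb
    have : (a, (f (a, b)).2) = f (a, b) := by
      ext
      · exact hb.symm
      · rfl
    rw [this, hf]
  refine Finset.sum_involution (fun b _ => (f (a, b)).2) ?_ ?_ ?_ ?_
  · intro b _; decide
  · intro b hb _ h
    simp only [mem_filter, mem_univ, true_and] at hb
    have := hA (a, b)
    unfold Ad at this
    have h' := congrArg Fin.val h
    simp only at *
    omega
  · intro b hb
    simp only [mem_filter, mem_univ, true_and] at hb ⊢
    rw [key b hb.2]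
    exact ⟨hk b hb.1 hb.2, rfl⟩
  · intro b hb
    simp only [mem_filter, mem_univ, true_and] at hb
    simp only [key b hb.2]

/-- number (mod 2) of right-moving cells of column `a` below `k` -/
def Hc (f : Fin m × Fin n → Fin m × Fin n) (a : Fin m) (k : ℕ) : ZMod 2 :=
  ∑ b : Fin n, if b.val < k ∧ (f (a, b)).1.val = a.val + 1 then 1 else 0

/-- number (mod 2) of left-moving cells of column `a` below `k` -/
def Lc (f : Fin m × Fin n → Fin m × Fin n) (a : Fin m) (k : ℕ) : ZMod 2 :=
  ∑ b : Fin n, if b.val < k ∧ (f (a, b)).1.val + 1 = a.val then 1 else 0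

lemma Hc_add_Lc (f : Fin m × Fin n → Fin m × Fin n) (hf : ∀ p, f (f p) = p)
    (hA : ∀ p, Ad p (f p)) (a : Fin m) (k : ℕ) (hkn : k ≤ n)
    (hk : ∀ b : Fin n, b.val < k → (f (a, b)).1.val = a.val → (f (a, b)).2.val < k) :
    Hc f a k + Lc f a k = k := by
  have h1 := vert_even f hf hA a k hk
  rw [sum_filter] at h1
  have h2 : ∑ b : Fin n, (if b.val < k then (1 : ZMod 2) else 0) = k := by
    rw [← sum_filter, sum_const, nsmul_eq_mul, mul_one]
    congr 1
    rw [Fin.card_filter_val_lt]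
    omega
  rw [← h2]
  refine (add_zero (Hc f a k + Lc f a k)).symm.trans ?_
  refine (congrArg (fun z => Hc f a k + Lc f a k + z) h1.symm).trans ?_
  unfold Hc Lc
  rw [← sum_add_distrib, ← sum_add_distrib]
  refine sum_congr rfl fun b _ => ?_
  have := hA (a, b)
  unfold Ad at this
  simp only at this
  by_cases hb : b.val < k
  · simp only [hb, true_and, if_true]
    split_ifs <;> first | omega | simp
  · simp [hb]

lemma Lc_succ (f : Fin m × Fin n → Fin m × Fin n) (hf : ∀ p, f (f p) = p)
    (hA : ∀ p, Ad p (f p)) (a a' : Fin m) (h : a'.val = a.val + 1) (k : ℕ) :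
    Lc f a' k = Hc f a k := by
  unfold Lc Hc
  refine sum_congr rfl fun b _ => ?_
  have h1 := hA (a, b)
  have h2 := hA (a', b)
  unfold Ad at h1 h2
  simp only at h1 h2
  have : (f (a', b)).1.val + 1 = a'.val ↔ (f (a, b)).1.val = a.val + 1 := by
    constructor
    · intro h3
      have : f (a', b) = (a, b) := by
        ext
        · change (f (a', b)).1.val = a.val; omega
        · change (f (a', b)).2.val = b.val; omega
      rw [← this, hf]; simp only [this]; omega
    · intro h3
      have : f (a, b) = (a', b) := by
        ext
        · change (f (a, b)).1.val = a'.val; omega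
        · change (f (a, b)).2.val = b.val; omega
      rw [← this, hf]; simp only [this]; omega
  simp only [this]

lemma Lc_n (f : Fin m × Fin n → Fin m × Fin n) (hf : ∀ p, f (f p) = p)
    (hA : ∀ p, Ad p (f p)) (hn : Even n) (j : ℕ) : ∀ a : Fin m, a.val = j → Lc f a n = 0 := by
  induction j with
  | zero =>
    intro a ha
    unfold Lc
    refine sum_eq_zero fun b _ => ?_
    rw [if_neg]; omega
  | succ j ih =>
    intro a ha
    have h0 : j < m := by have := a.2; omega
    have h1 := ih ⟨j, h0⟩ rfl
    have h2 := Hc_add_Lc f hf hA ⟨j, h0⟩ n le_rfl (fun b _ _ => (f _).2.2)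
    rw [Lc_succ f hf hA ⟨j, h0⟩ a ha]
    rw [h1, add_zero] at h2
    rw [h2]
    exact (ZMod.natCast_eq_zero_iff n 2).2 hn.two_dvd

lemma count_q (f : Fin m × Fin n → Fin m × Fin n) (hf : ∀ p, f (f p) = p)
    (hA : ∀ p, Ad p (f p)) (hn : Even n) (q : Fin m × Fin n) (hq : (f q).1.val = q.1.val + 1) :
    (((univ : Finset (Fin m × Fin n)).filter
      (fun p => (f p).1.val = p.1.val + 1 ∧ lx p q ∧ lx q (f p))).card : ZMod 2) = q.2.val := by
  obtain ⟨a, c⟩ := q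
  simp only at hq ⊢
  have hL := Lc_n f hf hA hn a a rfl
  have hH := Hc_add_Lc f hf hA a c c.2.le (by
    intro b hb hv
    have h1 := hA (a, b)
    unfold Ad at h1
    simp only at h1
    by_contra hcon
    have : f (a, b) = (a, c) := by
      ext
      · exact hv
      · change (f (a, b)).2.val = c.val; omega
    rw [← this, hf] at hq
    simp only [this] at hq
    omega)
  have e : ((univ : Finset (Fin m × Fin n)).filter
      (fun p => (f p).1.val = p.1.val + 1 ∧ lx p (a, c) ∧ lx (a, c) (f p))).card =
      ((univ : Finset (Fin n)).filter (fun b => (b.val < c.val ∧ (f (a, b)).1.val = a.val + 1) ∨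
        (c.val < b.val ∧ (f (a, b)).1.val + 1 = a.val))).card := by
    refine card_bij' (fun p _ => p.2) (fun b _ => if b.val < c.val then (a, b) else f (a, b))
      ?_ ?_ ?_ ?_
    · rintro ⟨x, y⟩ h
      have h1 := hA (x, y)
      simp only [mem_filter, mem_univ, true_and] at h ⊢
      simp only [lx, Ad] at h h1 ⊢
      by_cases hx : x = a
      · subst hx; left; omega
      · have hx' : x.val ≠ a.val := fun h => hx (Fin.ext h)
        have : f (x, y) = (a, y) := by
          ext
          · change (f (x, y)).1.val = a.val; omega
          · change (f (x, y)).2.val = y.val; omega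
        rw [← this, hf]; right
        simp only [this] at h h1
        simp only [true_and, this]
        omega
    · intro b h
      have h1 := hA (a, b)
      simp only [mem_filter, mem_univ, true_and] at h ⊢
      simp only [lx, Ad] at h h1 ⊢
      split_ifs with hb
      · refine ⟨?_, Or.inr ⟨rfl, hb⟩, Or.inl ?_⟩
        · change (f (a, b)).1.val = a.val + 1; omega
        · omega
      · rw [hf]
        refine ⟨?_, Or.inl ?_, Or.inr ⟨rfl, ?_⟩⟩
        · change a.val = (f (a, b)).1.val + 1; omega
        · omega
        · change c.val < b.val; omega
    · rintro ⟨x, y⟩ h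
      have h1 := hA (x, y)
      simp only [mem_filter, mem_univ, true_and] at h ⊢
      simp only [lx, Ad] at h h1 ⊢
      by_cases hx : x = a
      · subst hx; rw [if_pos]; omega
      · have hx' : x.val ≠ a.val := fun h => hx (Fin.ext h)
        have : f (x, y) = (a, y) := by
          ext
          · change (f (x, y)).1.val = a.val; omega
          · change (f (x, y)).2.val = y.val; omega
        rw [if_neg (by omega), ← this, hf]
    · intro b h
      have h1 := hA (a, b)
      simp only [mem_filter, mem_univ, true_and, Ad] at h h1 ⊢
      split_ifs with hb
      · rfl
      · apply Fin.ext; omega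
  rw [e, card_filter, Nat.cast_sum, ← hH]
  have two : ∀ z : ZMod 2, z + z = 0 := by decide
  refine Eq.trans ?_ (add_zero (Hc f a c + Lc f a c))
  refine Eq.trans ?_ (congrArg (fun z => Hc f a c + Lc f a c + z) hL)
  unfold Hc Lc at *
  rw [← sum_add_distrib, ← sum_add_distrib]
  refine sum_congr rfl fun b _ => ?_
  by_cases hbc : b = c
  · subst hbc
    simp [hq]
    omega
  have hbc' : b.val ≠ c.val := fun h => hbc (Fin.ext h)
  rcases lt_or_gt_of_ne hbc' with h | h
  · simp only [h, h.not_gt, true_and, false_and, or_false, b.2]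
    rw [add_assoc, two]; simp
  · simp only [h, h.not_gt, true_and, false_and, false_or, b.2]
    simp

lemma cross_parity (f : Fin m × Fin n → Fin m × Fin n) (hf : ∀ p, f (f p) = p)
    (hA : ∀ p, Ad p (f p)) (hn : Even n) :
    (((univ : Finset ((Fin m × Fin n) × (Fin m × Fin n))).filter
      (fun p => lx p.1 p.2 ∧ lx p.2 (f p.1) ∧ lx (f p.1) (f p.2))).card : ZMod 2) =
    ∑ q ∈ univ.filter (fun q : Fin m × Fin n => (f q).1.val = q.1.val + 1), (q.2.val : ZMod 2) := by
  have e : ((univ : Finset ((Fin m × Fin n) × (Fin m × Fin n))).filter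
      (fun p => lx p.1 p.2 ∧ lx p.2 (f p.1) ∧ lx (f p.1) (f p.2))) =
      univ.filter (fun p => (f p.2).1.val = p.2.1.val + 1 ∧
        ((f p.1).1.val = p.1.1.val + 1 ∧ lx p.1 p.2 ∧ lx p.2 (f p.1))) := by
    ext ⟨p, q⟩
    have h1 := hA p
    have h2 := hA q
    have h3 : f p = f q → p = q := fun h => by rw [← hf p, h, hf]
    have h4 : f p = q → p = f q := fun h => by rw [← hf p, h]
    have h5 : (f p).1.val = (f q).1.val → (f p).2.val = (f q).2.val → p.1.val = q.1.val ∧ p.2.val = q.2.val := by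
      intro a b; have := h3 (Prod.ext (Fin.ext a) (Fin.ext b)); simp [this]
    have h6 : (f p).1.val = q.1.val → (f p).2.val = q.2.val → p.1.val = (f q).1.val ∧ p.2.val = (f q).2.val := by
      intro a b; have := h4 (Prod.ext (Fin.ext a) (Fin.ext b)); simp [this]
    simp only [mem_filter, mem_univ, true_and]
    simp only [lx]
    unfold Ad at h1 h2
    omega
  rw [e, card_filter, ← univ_product_univ, sum_product_right, Nat.cast_sum, sum_filter]
  refine sum_congr rfl fun q _ => ?_
  by_cases hq : (f q).1.val = q.1.val + 1
  · simp only [hq, true_and, if_true]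
    rw [← count_q f hf hA hn q hq, card_filter]
  · simp [hq]

end grid
end Kast

namespace Kast
open Finset

section grid
variable {m n : ℕ}

/-- the lexicographic enumeration of the grid -/
def ee : Fin m × Fin n ≃ Fin (m * n) := finProdFinEquiv

lemma lx_iff (p q : Fin m × Fin n) : ee p < ee q ↔ lx p q := by
  unfold ee
  rw [Fin.lt_def, finProdFinEquiv_apply_val, finProdFinEquiv_apply_val]
  unfold lx
  obtain ⟨⟨a, ha⟩, ⟨b, hb⟩⟩ := p
  obtain ⟨⟨c, hc⟩, ⟨d, hd⟩⟩ := q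
  simp only
  rcases lt_trichotomy a c with h | h | h
  · have : n * (a + 1) ≤ n * c := Nat.mul_le_mul_left n h
    rw [mul_add] at this
    simp only [h, true_or, iff_true]; omega
  · subst h; simp
  · have : n * (c + 1) ≤ n * a := Nat.mul_le_mul_left n h
    rw [mul_add] at this
    have h1 : ¬ a < c := by omega
    have h2 : a ≠ c := by omega
    simp only [h1, h2, false_and, or_false, iff_false]; omega

/-- crossing number on the grid -/
def crs (f : Fin m × Fin n → Fin m × Fin n) : ℕ :=
  ((univ : Finset ((Fin m × Fin n) × (Fin m × Fin n))).filter
      (fun p => lx p.1 p.2 ∧ lx p.2 (f p.1) ∧ lx (f p.1) (f p.2))).card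

/-- sign of a horizontal edge -/
def hz (p q : Fin m × Fin n) : ℤ := if p.1 = q.1 then 1 else (-1) ^ p.2.val

lemma prod_hz (f : Fin m × Fin n → Fin m × Fin n) (hf : ∀ p, f (f p) = p)
    (hA : ∀ p, Ad p (f p)) (hn : Even n) (C : Fin m × Fin n → Prop) [DecidablePred C]
    (hC : ∀ p, C (f p) ↔ ¬ C p) :
    ∏ v ∈ univ.filter C, hz v (f v) = (-1) ^ crs f := by
  have h1 := cross_parity f hf hA hn
  rw [← Nat.cast_sum, ZMod.natCast_eq_natCast_iff'] at h1
  have h2 : (-1 : ℤ) ^ crs f =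
      (-1) ^ (∑ q ∈ univ.filter (fun q : Fin m × Fin n => (f q).1.val = q.1.val + 1), q.2.val) := by
    rw [neg_one_pow_eq_pow_mod_two, neg_one_pow_eq_pow_mod_two (n := ∑ q ∈ _, _), ← h1]; rfl
  rw [h2, ← prod_pow_eq_pow_sum]
  have h3 : ∏ v ∈ univ.filter C, hz v (f v) =
      ∏ v ∈ univ.filter (fun v => C v ∧ (f v).1.val ≠ v.1.val), (-1 : ℤ) ^ v.2.val := by
    rw [prod_filter, prod_filter]
    refine prod_congr rfl fun v _ => ?_
    by_cases hv : v.1 = (f v).1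
    · have hv' : (f v).1.val = v.1.val := by rw [← hv]
      simp [hz, hv, ← hv']
    · have hv' : (f v).1.val ≠ v.1.val := fun h => hv (Fin.ext h.symm)
      simp [hz, hv, hv']
  rw [h3]
  refine prod_bij' (fun p _ => if (f p).1.val = p.1.val + 1 then p else f p)
    (fun q _ => if C q then q else f q) ?_ ?_ ?_ ?_ ?_
  · intro p hp
    simp only [mem_filter, mem_univ, true_and] at hp ⊢
    have := hA p
    unfold Ad at this
    split_ifs with h
    · exact h
    · rw [hf]; omega
  · intro p hp
    simp only [mem_filter, mem_univ, true_and] at hp ⊢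
    split_ifs with h
    · exact ⟨h, by omega⟩
    · rw [hf, hC]; exact ⟨h, by omega⟩
  · intro p hp
    simp only [mem_filter, mem_univ, true_and] at hp ⊢
    by_cases h : (f p).1.val = p.1.val + 1
    · simp [h, hp.1]
    · simp [h, hC, hp.1, hf]
  · intro p hp
    simp only [mem_filter, mem_univ, true_and] at hp ⊢
    by_cases h : C p
    · simp [h, hp]
    · have : ¬ (p.1.val = (f p).1.val + 1) := by omega
      simp [h, hf, this]
  · intro p hp
    simp only [mem_filter, mem_univ, true_and] at hp ⊢
    have := hA p
    unfold Ad at this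
    split_ifs with h
    · rfl
    · congr 1; omega

lemma prod_G_grid (f : Fin m × Fin n → Fin m × Fin n) (hf : ∀ p, f (f p) = p)
    (hA : ∀ p, Ad p (f p)) (T : Finset (Fin (m * n)))
    (hT : ∀ p, ee (f p) ∈ T ↔ ee p ∉ T) :
    ∏ p ∈ PP T, G (fun x => ee (f (ee.symm x))) p.1 p.2 =
      (-1) ^ crs f := by
  rw [prod_G_eq]
  · congr 1
    unfold crs
    refine card_bij' (fun p _ => (ee.symm p.1, ee.symm p.2))
      (fun p _ => (ee p.1, ee p.2)) ?_ ?_ ?_ ?_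
    · rintro ⟨x, y⟩ h
      simpa [← lx_iff] using h
    · rintro ⟨x, y⟩ h
      simpa [← lx_iff] using h
    · rintro ⟨x, y⟩ h
      simp
    · rintro ⟨x, y⟩ h
      simp
  · intro x; simp [hf]
  · intro x h
    have h1 := hA (ee.symm x)
    have h2 : f (ee.symm x) = ee.symm x := by
      rw [Equiv.eq_symm_apply]; exact h
    rw [h2] at h1
    unfold Ad at h1
    omega
  · intro x
    have := hT (ee.symm x)
    simpa using this

/-- half of a permutation, as a matching -/
def half (σ : Equiv.Perm (Fin m × Fin n)) (C : Fin m × Fin n → Prop) [DecidablePred C] :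
    Fin m × Fin n → Fin m × Fin n := fun p => if C p then σ p else σ.symm p

lemma Ad_symm {p q : Fin m × Fin n} (h : Ad p q) : Ad q p := by unfold Ad at *; omega

lemma half_props (σ : Equiv.Perm (Fin m × Fin n)) (hσ : ∀ p, Ad p (σ p))
    (C : Fin m × Fin n → Prop) [DecidablePred C]
    (hC : ∀ p q, Ad p q → (C q ↔ ¬ C p)) :
    (∀ p, half σ C (half σ C p) = p) ∧ (∀ p, Ad p (half σ C p)) := by
  have h1 : ∀ p, Ad p (σ.symm p) := by
    intro p
    have := hσ (σ.symm p)
    rw [Equiv.apply_symm_apply] at this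
    exact Ad_symm this
  constructor
  · intro p
    unfold half
    by_cases h : C p
    · have : ¬ C (σ p) := by rw [hC p _ (hσ p)]; simpa using h
      simp only [h, this, if_true, if_false, Equiv.symm_apply_apply]
    · have : C (σ.symm p) := by rw [hC p _ (h1 p)]; exact h
      simp only [h, this, if_true, if_false, Equiv.apply_symm_apply]
  · intro p
    unfold half
    split_ifs
    · exact hσ p
    · exact h1 p

lemma half_side (σ : Equiv.Perm (Fin m × Fin n)) (hσ : ∀ p, Ad p (σ p)) (hn : Even n)
    (C : Fin m × Fin n → Prop) [DecidablePred C]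
    (hC : ∀ p q, Ad p q → (C q ↔ ¬ C p)) :
    ∏ p ∈ PP (univ.filter (fun x => C (ee.symm x))),
      G (ee.permCongr σ) p.1 p.2 = ∏ v ∈ univ.filter C, hz v (σ v) := by
  obtain ⟨h1, h2⟩ := half_props σ hσ C hC
  have e1 : ∏ v ∈ univ.filter C, hz v (σ v) = ∏ v ∈ univ.filter C, hz v (half σ C v) := by
    refine prod_congr rfl fun v hv => ?_
    simp only [mem_filter, mem_univ, true_and] at hv
    simp [half, hv]
  rw [e1, prod_hz _ h1 h2 hn C (fun p => hC _ _ (h2 p)),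
    ← prod_G_grid _ h1 h2 (univ.filter (fun x => C (ee.symm x)))]
  · refine prod_congr rfl fun p hp => ?_
    simp only [PP, mem_filter, mem_product, mem_univ, true_and] at hp
    simp [G, half, hp]
  · intro p
    simpa using hC _ _ (h2 p)

/-- colour -/
def col (p : Fin m × Fin n) : Prop := Even (p.1.val + p.2.val)

instance : DecidablePred (col (m := m) (n := n)) := fun p => by unfold col; infer_instance

lemma col_Ad (p q : Fin m × Fin n) (h : Ad p q) : col q ↔ ¬ col p := by
  unfold col Ad at *
  rw [Nat.even_iff, Nat.even_iff]; omega

/-- orientation sign -/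
def gl (p q : Fin m × Fin n) : ℤ := if lx p q then 1 else -1

lemma sign_term (σ : Equiv.Perm (Fin m × Fin n)) (hσ : ∀ p, Ad p (σ p)) (hn : Even n) :
    (Equiv.Perm.sign σ : ℤ) * ∏ v, (gl v (σ v) * hz v (σ v)) = 1 := by
  have hs := sign_cross (ee.permCongr σ)
    (univ.filter (fun x => col (ee.symm x)))
    (univ.filter (fun x => ¬ col (ee.symm x)))
    (by
      ext x
      simp only [mem_image, mem_filter, mem_univ, true_and]
      constructor
      · rintro ⟨y, hy, rfl⟩
        simpa [col_Ad _ _ (hσ _)] using hy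
      · intro hx
        refine ⟨(ee.permCongr σ).symm x, ?_, by simp⟩
        have := col_Ad _ _ (hσ (σ.symm (ee.symm x)))
        simp only [Equiv.apply_symm_apply] at this
        have e : ee.symm ((ee.permCongr σ).symm x) = σ.symm (ee.symm x) := by
          simp [Equiv.symm_apply_eq]
        rw [e]
        tauto)
    (by
      ext x
      simp only [mem_image, mem_filter, mem_univ, true_and]
      constructor
      · rintro ⟨y, hy, rfl⟩
        simpa [col_Ad _ _ (hσ _)] using hy
      · intro hx
        refine ⟨(ee.permCongr σ).symm x, ?_, by simp⟩
        have := col_Ad _ _ (hσ (σ.symm (ee.symm x)))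
        simp only [Equiv.apply_symm_apply] at this
        have e : ee.symm ((ee.permCongr σ).symm x) = σ.symm (ee.symm x) := by
          simp [Equiv.symm_apply_eq]
        rw [e]
        tauto)
    (disjoint_filter_filter_not _ _ _)
    (filter_union_filter_not_eq _ _)
  rw [Equiv.Perm.sign_permCongr, half_side σ hσ hn col col_Ad,
    half_side σ hσ hn (fun p => ¬ col p) (fun p q h => not_congr (col_Ad p q h)),
    prod_filter_mul_prod_filter_not] at hs
  have e : ∏ v, g v (ee.permCongr σ v) = ∏ v, gl v (σ v) := by
    refine (Fintype.prod_equiv ee _ _ fun v => ?_).symm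
    simp [g, gl, lx_iff]
  rw [hs, e, prod_mul_distrib]
  have q1 : (∏ v, gl v (σ v)) * ∏ v, gl v (σ v) = 1 := by
    rw [← prod_mul_distrib]
    refine prod_eq_one fun v _ => ?_
    unfold gl; split_ifs <;> norm_num
  have q2 : (∏ v, hz v (σ v)) * ∏ v, hz v (σ v) = 1 := by
    rw [← prod_mul_distrib]
    refine prod_eq_one fun v _ => ?_
    unfold hz; split_ifs
    · norm_num
    · rw [← mul_pow]; norm_num
  linear_combination (∏ v, hz v (σ v)) * (∏ v, hz v (σ v)) * q1 + q2

end grid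
end Kast

namespace Kast
open Finset

section grid
variable {m n : ℕ}

lemma Ad_iff (p q : Fin m × Fin n) : (gridGraph m n).Adj p q ↔ Ad p q := by
  unfold gridGraph Ad
  rw [SimpleGraph.fromRel_adj]
  obtain ⟨⟨a, ha⟩, ⟨b, hb⟩⟩ := p
  obtain ⟨⟨c, hc⟩, ⟨d, hd⟩⟩ := q
  simp only [ne_eq, Prod.mk.injEq, Fin.mk.injEq]
  omega

/-- involutions along edges -/
abbrev Inv (m n : ℕ) := {f : Fin m × Fin n → Fin m × Fin n // (∀ p, f (f p) = p) ∧ ∀ p, Ad p (f p)}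

/-- the subgraph of an involution -/
def toSub (f : Inv m n) : (gridGraph m n).Subgraph where
  verts := Set.univ
  Adj p q := f.1 p = q
  adj_sub := by
    rintro p q rfl
    exact (Ad_iff _ _).2 (f.2.2 p)
  edge_vert := fun _ => Set.mem_univ _
  symm := ⟨by
    rintro p q rfl
    exact f.2.1 p⟩

lemma card_Inv : Nat.card (Inv m n) = numPerfectMatchings (gridGraph m n) := by
  unfold numPerfectMatchings
  rw [← Nat.card_coe_set_eq]
  refine Nat.card_eq_of_bijective (fun f => ⟨toSub f, ?_⟩) ⟨?_, ?_⟩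
  · change (toSub f).IsPerfectMatching
    rw [SimpleGraph.Subgraph.isPerfectMatching_iff]
    intro v
    exact ⟨f.1 v, rfl, fun y hy => Eq.symm hy⟩
  · intro f g h
    have h1 : toSub f = toSub g := congrArg Subtype.val h
    apply Subtype.ext
    funext p
    have h2 : (toSub f).Adj p (f.1 p) := rfl
    rw [h1] at h2
    exact Eq.symm h2
  · rintro ⟨M, hM⟩
    have hM' : M.IsPerfectMatching := hM
    have hM2 := SimpleGraph.Subgraph.isPerfectMatching_iff.1 hM'
    choose f hf hf' using hM2
    refine ⟨⟨f, fun p => (hf' (f p) p (M.symm.symm _ _ (hf p))).symm,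
      fun p => (Ad_iff _ _).1 (M.adj_sub (hf p))⟩, ?_⟩
    apply Subtype.ext
    apply SimpleGraph.Subgraph.ext
    · exact (hM'.2.verts_eq_univ).symm
    · funext p q
      apply propext
      constructor
      · rintro rfl
        exact hf p
      · intro h
        exact (hf' p q h).symm

/-- permutations along edges are pairs of matchings -/
def permEquiv : {σ : Equiv.Perm (Fin m × Fin n) // ∀ p, Ad p (σ p)} ≃ Inv m n × Inv m n where
  toFun σ := (⟨half σ.1 col, half_props σ.1 σ.2 col col_Ad⟩,
    ⟨half σ.1 (fun p => ¬ col p), half_props σ.1 σ.2 _ fun p q h => not_congr (col_Ad p q h)⟩)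
  invFun fg := ⟨⟨fun p => if col p then fg.1.1 p else fg.2.1 p,
      fun p => if col p then fg.2.1 p else fg.1.1 p, by
        intro p
        have h1 := col_Ad _ _ (fg.1.2.2 p)
        have h2 := col_Ad _ _ (fg.2.2.2 p)
        by_cases h : col p
        · simp [h, h1, fg.1.2.1]
        · simp [h, h2, fg.2.2.1], by
        intro p
        have h1 := col_Ad _ _ (fg.1.2.2 p)
        have h2 := col_Ad _ _ (fg.2.2.2 p)
        by_cases h : col p
        · simp [h, h2, fg.2.2.1]
        · simp [h, h1, fg.1.2.1]⟩, by
      intro p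
      change Ad p (if col p then fg.1.1 p else fg.2.1 p)
      split_ifs
      · exact fg.1.2.2 p
      · exact fg.2.2.2 p⟩
  left_inv := by
    rintro ⟨σ, hσ⟩
    apply Subtype.ext
    ext1 p
    change (if col p then half σ col p else half σ (fun p => ¬ col p) p) = σ p
    unfold half
    by_cases h : col p <;> simp [h]
  right_inv := by
    rintro ⟨f, g⟩
    refine Prod.ext (Subtype.ext (funext fun p => ?_)) (Subtype.ext (funext fun p => ?_))
    · simp only [half]
      by_cases h : col p
      · simp [h]
      · simp [h, Equiv.symm]
    · simp only [half]
      by_cases h : col p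
      · simp [h, Equiv.symm]
      · simp [h]

/-- gauge factor -/
noncomputable def lam (p : Fin m × Fin n) : ℂ := I ^ p.1.val * (-1) ^ (p.2.val.choose 2)

/-- gauge factor -/
noncomputable def mu (p : Fin m × Fin n) : ℂ := I * (-1) ^ p.2.val * (lam p)⁻¹

lemma lam_ne (p : Fin m × Fin n) : lam p ≠ 0 := by
  unfold lam
  exact mul_ne_zero (pow_ne_zero _ I_ne_zero) (pow_ne_zero _ (by norm_num))

lemma prod_gauge (hn : Even n) : ∏ p : Fin m × Fin n, (lam p * mu p) = 1 := by
  have h1 : ∀ p : Fin m × Fin n, lam p * mu p = I * (-1) ^ p.2.val := by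
    intro p
    have := lam_ne p
    unfold mu
    field_simp
  simp_rw [h1]
  rw [Fintype.prod_prod_type]
  refine prod_eq_one fun a _ => ?_
  simp only
  rw [Fin.prod_univ_eq_prod_range (fun b => I * (-1) ^ b)]
  obtain ⟨k, rfl⟩ := hn
  clear h1
  induction k with
  | zero => simp
  | succ k ih =>
    rw [show k + 1 + (k + 1) = k + k + 1 + 1 by ring, prod_range_succ, prod_range_succ, ih,
      pow_succ, ← two_mul, pow_mul]
    simp

lemma gauge_local (p q : Fin m × Fin n) (h : Ad p q) :
    ((gl p q * hz p q : ℤ) : ℂ) = lam p * mu q * kasteleynMatrix m n p q := by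
  have hp := lam_ne p
  have hq := lam_ne q
  have sq : ∀ k : ℕ, ((-1 : ℂ) ^ k) * (-1) ^ k = 1 := fun k => by rw [← mul_pow]; simp
  obtain ⟨⟨a, ha⟩, ⟨b, hb⟩⟩ := p
  obtain ⟨⟨c, hc⟩, ⟨d, hd⟩⟩ := q
  unfold Ad at h
  simp only at h
  unfold mu
  rcases h with ⟨rfl, rfl | rfl⟩ | ⟨rfl, rfl | rfl⟩
  · have e : lam (⟨a, ha⟩, ⟨b + 1, hd⟩) = lam ((⟨a, ha⟩, ⟨b, hb⟩) : Fin m × Fin n) * (-1) ^ b := by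
      simp only [lam, Nat.choose_succ_succ' b 1, Nat.choose_one_right, pow_add]; ring
    rw [e] at *
    simp [gl, hz, lx, kasteleynMatrix]
    field_simp
    rw [I_sq]; ring
  · have e : lam (⟨a, ha⟩, ⟨d + 1, hb⟩) = lam ((⟨a, ha⟩, ⟨d, hd⟩) : Fin m × Fin n) * (-1) ^ d := by
      simp only [lam, Nat.choose_succ_succ' d 1, Nat.choose_one_right, pow_add]; ring
    rw [e] at *
    simp [gl, hz, lx, kasteleynMatrix]
    field_simp
    have := sq d
    rw [I_sq]
    linear_combination this
  · have e : lam (⟨a + 1, hc⟩, ⟨b, hb⟩) = lam ((⟨a, ha⟩, ⟨b, hb⟩) : Fin m × Fin n) * I := by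
      simp only [lam]; ring
    rw [e] at *
    have := I_ne_zero
    simp [gl, hz, lx, kasteleynMatrix]
    field_simp
    rw [I_sq]; ring
  · have e : lam (⟨c + 1, ha⟩, ⟨b, hb⟩) = lam ((⟨c, hc⟩, ⟨b, hb⟩) : Fin m × Fin n) * I := by
      simp only [lam]; ring
    rw [e] at *
    have := I_ne_zero
    simp [gl, hz, lx, kasteleynMatrix]
    field_simp
    rw [I_sq]

lemma kast_symm (p q : Fin m × Fin n) : kasteleynMatrix m n p q = kasteleynMatrix m n q p := by
  unfold kasteleynMatrix
  simp only [eq_comm (a := p.1), eq_comm (a := p.2), or_comm]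

lemma kast_zero (p q : Fin m × Fin n) (h : ¬ Ad p q) : kasteleynMatrix m n p q = 0 := by
  unfold kasteleynMatrix Ad at *
  rw [if_neg (by rw [Fin.ext_iff]; omega), if_neg (by rw [Fin.ext_iff]; omega)]

lemma term_eq (σ : Equiv.Perm (Fin m × Fin n)) (hσ : ∀ p, Ad p (σ p)) (hn : Even n) :
    ((Equiv.Perm.sign σ : ℤ) : ℂ) * ∏ v, kasteleynMatrix m n (σ v) v = 1 := by
  have h := congrArg (Int.cast : ℤ → ℂ) (sign_term σ hσ hn)
  rw [Int.cast_mul, Int.cast_prod, Int.cast_one] at h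
  rw [← h]
  congr 1
  rw [prod_congr rfl fun v _ => gauge_local v (σ v) (hσ v), prod_mul_distrib, prod_mul_distrib,
    Equiv.prod_comp σ mu, ← prod_mul_distrib, prod_gauge hn, one_mul]
  exact prod_congr rfl fun v _ => kast_symm _ _

end grid
end Kast

/-- For m positive and n positive even, the determinant of the Kasteleyn
matrix equals the square of the number of perfect matchings of the m-by-n
grid graph. -/
theorem det_kasteleynMatrix (m n : ℕ) (hm : 0 < m) (hn : 0 < n) (hne : Even n) :
    (kasteleynMatrix m n).det = ((numPerfectMatchings (gridGraph m n) : ℂ)) ^ 2 := by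
  classical
  rw [Matrix.det_apply']
  have h1 : ∀ σ : Equiv.Perm (Fin m × Fin n),
      ((Equiv.Perm.sign σ : ℤ) : ℂ) * ∏ v, kasteleynMatrix m n (σ v) v =
        if ∀ p, Kast.Ad p (σ p) then 1 else 0 := by
    intro σ
    split_ifs with h
    · exact Kast.term_eq σ h hne
    · push Not at h
      obtain ⟨p, hp⟩ := h
      rw [Finset.prod_eq_zero (Finset.mem_univ p), mul_zero]
      rw [Kast.kast_symm]
      exact Kast.kast_zero _ _ hp
  rw [Finset.sum_congr rfl fun σ _ => h1 σ, ← Finset.sum_filter, Finset.sum_const, nsmul_eq_mul,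
    mul_one, ← Fintype.card_subtype, ← Nat.card_eq_fintype_card, Nat.card_congr Kast.permEquiv,
    Nat.card_prod, Kast.card_Inv, Nat.cast_mul, sq]
end

section
/- Let m, n be positive integers, let C_m and C_n be the m-by-m and n-by-n tridiagonal matrices with (x,y)-entry 1 if |x − y| = 1 and 0 otherwise, and let I_m, I_n denote identity matrices. Then det(C_m ⊗ I_n + i·(I_m ⊗ C_n)) = ∏_{j=1}^{m} ∏_{k=1}^{n} (2 cos(πj/(m+1)) + 2i cos(πk/(n+1))), where ⊗ denotes the Kronecker product of complex matrices and i is the imaginary unit. -/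
open Real Matrix Kronecker

/-- The m-by-m tridiagonal 0-1 complex matrix with ones exactly on the first
super- and sub-diagonals (adjacency matrix of the path graph on m vertices). -/
def pathMatrixC (m : ℕ) : Matrix (Fin m) (Fin m) ℂ :=
  fun x y => if x.val + 1 = y.val ∨ y.val + 1 = x.val then 1 else 0

lemma path_sum (m : ℕ) (g : ℕ → ℂ) (h0 : g 0 = 0) (hm : g (m + 1) = 0) (x : Fin m) :
    ∑ y : Fin m, pathMatrixC m x y * g (y.val + 1) = g x.val + g (x.val + 2) := by
  have hx := x.isLt
  have key : ∀ y : ℕ, (if x.val + 1 = y ∨ y + 1 = x.val then (1 : ℂ) else 0) * g (y + 1)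
      = (if y + 1 = x.val then g x.val else 0) + (if y = x.val + 1 then g (x.val + 2) else 0) := by
    intro y
    by_cases h1 : x.val + 1 = y
    · have h2 : ¬ (y + 1 = x.val) := by omega
      subst h1
      simp [h2]
    · by_cases h2 : y + 1 = x.val
      · have h3 : ¬ (y = x.val + 1) := by omega
        simp [h2, h3]
      · have h3 : ¬ (y = x.val + 1) := by omega
        simp [h1, h2, h3]
  unfold pathMatrixC
  rw [Fin.sum_univ_eq_sum_range
    (fun y => (if x.val + 1 = y ∨ y + 1 = x.val then (1 : ℂ) else 0) * g (y + 1)) m,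
    Finset.sum_congr rfl (fun y _ => key y), Finset.sum_add_distrib]
  congr 1
  · rcases hk : x.val with _ | k
    · simp [h0]
    · have : k < m := by omega
      simp [this]
  · rw [Finset.sum_ite_eq']
    split_ifs with h
    · rfl
    · have : x.val + 1 = m := by
        simp at h
        omega
      rw [← hm]; congr 1; omega

/-- angle -/
noncomputable def pathAngle (m : ℕ) (j : Fin m) : ℝ := π * ((j.val + 1 : ℕ) : ℝ) / (m + 1)

/-- eigenvector matrix -/
noncomputable def pathS (m : ℕ) : Matrix (Fin m) (Fin m) ℂ :=
  fun x j => ((Real.sin (((x.val + 1 : ℕ) : ℝ) * pathAngle m j) : ℝ) : ℂ)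

/-- eigenvalue -/
noncomputable def pathEig (m : ℕ) (j : Fin m) : ℂ := ((2 * Real.cos (pathAngle m j) : ℝ) : ℂ)

lemma pathAngle_mem (m : ℕ) (j : Fin m) : 0 < pathAngle m j ∧ pathAngle m j < π := by
  unfold pathAngle
  have hj : ((j.val + 1 : ℕ) : ℝ) < m + 1 := by
    have := j.isLt
    exact_mod_cast Nat.succ_lt_succ this
  have hp := Real.pi_pos
  constructor
  · positivity
  · rw [div_lt_iff₀ (by positivity)]
    exact mul_lt_mul_of_pos_left hj hp

lemma path_mul (m : ℕ) : pathMatrixC m * pathS m = pathS m * Matrix.diagonal (pathEig m) := by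
  ext x j
  rw [Matrix.mul_diagonal, Matrix.mul_apply]
  have := path_sum m (fun t => ((Real.sin ((t : ℝ) * pathAngle m j) : ℝ) : ℂ)) (by simp) (by
    have : ((m + 1 : ℕ) : ℝ) * pathAngle m j = ((j.val + 1 : ℕ) : ℝ) * π := by
      unfold pathAngle
      have : (m : ℝ) + 1 ≠ 0 := by positivity
      push_cast
      field_simp
    simp only [this, Real.sin_nat_mul_pi, Complex.ofReal_zero]) x
  simp only [pathS] at this ⊢
  rw [this, pathEig, ← Complex.ofReal_add, ← Complex.ofReal_mul]
  congr 1
  have e1 : (x.val : ℝ) * pathAngle m j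
    = ((x.val + 1 : ℕ) : ℝ) * pathAngle m j - pathAngle m j := by push_cast; ring
  have e2 : ((x.val + 2 : ℕ) : ℝ) * pathAngle m j
    = ((x.val + 1 : ℕ) : ℝ) * pathAngle m j + pathAngle m j := by push_cast; ring
  rw [e1, e2, Real.sin_sub, Real.sin_add]
  ring

lemma pathEig_inj (m : ℕ) : Function.Injective (pathEig m) := by
  intro a b h
  unfold pathEig at h
  have h1 := Complex.ofReal_injective h
  have h2 : Real.cos (pathAngle m a) = Real.cos (pathAngle m b) := by linarith
  have ha := pathAngle_mem m a
  have hb := pathAngle_mem m b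
  have h3 := Real.injOn_cos ⟨ha.1.le, ha.2.le⟩ ⟨hb.1.le, hb.2.le⟩ h2
  unfold pathAngle at h3
  have : (m : ℝ) + 1 ≠ 0 := by positivity
  have hp := Real.pi_ne_zero
  field_simp at h3
  have h4 : a.val + 1 = b.val + 1 := by exact_mod_cast h3
  exact Fin.ext (by omega)

lemma pathS_det (m : ℕ) : (pathS m).det ≠ 0 := by
  rw [← isUnit_iff_ne_zero, ← Matrix.isUnit_iff_isUnit_det,
    ← Matrix.linearIndependent_cols_iff_isUnit]
  refine Module.End.eigenvectors_linearIndependent' (Matrix.toLin' (pathMatrixC m))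
    (pathEig m) (pathEig_inj m) _ (fun j => ?_)
  refine ⟨?_, ?_⟩
  · rw [Module.End.mem_eigenspace_iff, Matrix.toLin'_apply]
    ext x
    have := congrFun (congrFun (path_mul m) x) j
    rw [Matrix.mul_diagonal, Matrix.mul_apply] at this
    simp only [Matrix.mulVec, dotProduct, Matrix.col_apply, Pi.smul_apply, smul_eq_mul]
    rw [this, mul_comm]
  · intro h
    have hx := congrFun h ⟨0, j.pos⟩
    have hs := Real.sin_pos_of_pos_of_lt_pi (pathAngle_mem m j).1 (pathAngle_mem m j).2
    simp only [Matrix.col_apply, pathS, Pi.zero_apply] at hx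
    have := Complex.ofReal_eq_zero.mp hx
    simp at this
    exact hs.ne' this

/-- det(C_m ⊗ I_n + i (I_m ⊗ C_n)) =
∏_{j=1}^m ∏_{k=1}^n (2cos(πj/(m+1)) + 2i cos(πk/(n+1))). -/
theorem det_kronecker_path (m n : ℕ) (hm : 0 < m) (hn : 0 < n) :
    (pathMatrixC m ⊗ₖ (1 : Matrix (Fin n) (Fin n) ℂ) +
        Complex.I • ((1 : Matrix (Fin m) (Fin m) ℂ) ⊗ₖ pathMatrixC n)).det =
      ∏ j ∈ Finset.Icc 1 m, ∏ k ∈ Finset.Icc 1 n,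
        (((2 * Real.cos (π * j / (m + 1)) : ℝ) : ℂ) +
          Complex.I * ((2 * Real.cos (π * k / (n + 1)) : ℝ) : ℂ)) := by
  have hS : (pathS m ⊗ₖ pathS n).det ≠ 0 := by
    rw [Matrix.det_kronecker]
    exact mul_ne_zero (pow_ne_zero _ (pathS_det m)) (pow_ne_zero _ (pathS_det n))
  have hmul : (pathMatrixC m ⊗ₖ (1 : Matrix (Fin n) (Fin n) ℂ) +
        Complex.I • ((1 : Matrix (Fin m) (Fin m) ℂ) ⊗ₖ pathMatrixC n)) * (pathS m ⊗ₖ pathS n)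
      = (pathS m ⊗ₖ pathS n) *
        Matrix.diagonal (fun p : Fin m × Fin n => pathEig m p.1 + Complex.I * pathEig n p.2) := by
    rw [Matrix.add_mul, Matrix.smul_mul, ← Matrix.mul_kronecker_mul, ← Matrix.mul_kronecker_mul,
      path_mul, path_mul, Matrix.one_mul, Matrix.one_mul]
    ext ⟨a, b⟩ ⟨c, d⟩
    simp only [Matrix.add_apply, Matrix.smul_apply, Matrix.kronecker_apply, Matrix.mul_diagonal,
      smul_eq_mul]
    ring
  have hdet := congrArg Matrix.det hmul
  rw [Matrix.det_mul, Matrix.det_mul, mul_comm] at hdet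
  rw [mul_left_cancel₀ hS hdet, Matrix.det_diagonal, Fintype.prod_prod_type]
  have hI : ∀ (N : ℕ) (f : ℕ → ℂ), ∏ j ∈ Finset.Icc 1 N, f j = ∏ j : Fin N, f (j.val + 1) := by
    intro N f
    rw [Fin.prod_univ_eq_prod_range (fun j => f (j + 1)) N, Finset.range_eq_Ico,
      Finset.prod_Ico_add' f 0 N 1]
    rfl
  rw [hI]
  refine Finset.prod_congr rfl fun j _ => ?_
  rw [hI]
  rfl
end

section
/- Let m and n be positive integers each divisible by 4, let D_m^+ and D_n^+ be the circulant matrices with (x,y)-entry 1 if the indices differ by ±1 modulo m (respectively modulo n) and 0 otherwise, and let I_m, I_n be identity matrices. Then det(D_m^+ ⊗ I_n + i·(I_m ⊗ D_n^+)) = 0, where ⊗ denotes the Kronecker product and i is the imaginary unit. -/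
open Matrix Kronecker

/-- The m-by-m circulant matrix D_m^+ with (x,y)-entry 1 if the indices differ
by ±1 modulo m, and 0 otherwise (adjacency matrix of the cycle graph on m
vertices). -/
def cycleMatrix (m : ℕ) : Matrix (Fin m) (Fin m) ℂ :=
  fun x y => if y.val = (x.val + 1) % m ∨ x.val = (y.val + 1) % m then 1 else 0

theorem cycle_mulVec_aux (m : ℕ) (hm : 0 < m) (hm4 : 4 ∣ m) (x : Fin m) :
    ∑ y : Fin m, cycleMatrix m x y * Complex.I ^ y.val = 0 := by
  obtain ⟨k, rfl⟩ := hm4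
  have hx := x.isLt
  have hI : Complex.I ^ (4 * k) = 1 := by rw [pow_mul, Complex.I_pow_four, one_pow]
  have key : ∀ a : ℕ, Complex.I ^ (a % (4 * k)) = Complex.I ^ a := by
    intro a
    conv_rhs => rw [← Nat.mod_add_div a (4 * k), pow_add, pow_mul, hI, one_pow, mul_one]
  let s : Fin (4 * k) := ⟨(x.val + 1) % (4 * k), Nat.mod_lt _ hm⟩
  let p : Fin (4 * k) := ⟨(x.val + (4 * k - 1)) % (4 * k), Nat.mod_lt _ hm⟩
  have hs : s.val = if x.val + 1 = 4 * k then 0 else x.val + 1 := by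
    show (x.val + 1) % (4 * k) = _
    split_ifs with h
    · rw [h, Nat.mod_self]
    · exact Nat.mod_eq_of_lt (by omega)
  have hp : p.val = if x.val = 0 then 4 * k - 1 else x.val - 1 := by
    show (x.val + (4 * k - 1)) % (4 * k) = _
    split_ifs with h
    · rw [h, zero_add]; exact Nat.mod_eq_of_lt (by omega)
    · rw [show x.val + (4 * k - 1) = (x.val - 1) + 4 * k by omega, Nat.add_mod_right]
      exact Nat.mod_eq_of_lt (by omega)
  have hsp : s ≠ p := by
    intro h
    have := congrArg Fin.val h
    rw [hs, hp] at this
    split_ifs at this <;> omega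
  have hc : ∀ y : Fin (4 * k), cycleMatrix (4 * k) x y * Complex.I ^ y.val =
      (if y = s then Complex.I ^ y.val else 0) + (if y = p then Complex.I ^ y.val else 0) := by
    intro y
    have h1 : y.val = (x.val + 1) % (4 * k) ↔ y = s := by rw [Fin.ext_iff]
    have h2 : x.val = (y.val + 1) % (4 * k) ↔ y = p := by
      rw [Fin.ext_iff, hp]
      have hy := y.isLt
      by_cases h : y.val + 1 = 4 * k
      · rw [h, Nat.mod_self]; split_ifs <;> omega
      · rw [Nat.mod_eq_of_lt (by omega)]; split_ifs <;> omega
    unfold cycleMatrix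
    simp only [h1, h2]
    by_cases a : y = s
    · subst a; simp [hsp]
    · simp [a]
  rw [Finset.sum_congr rfl (fun y _ => hc y), Finset.sum_add_distrib]
  simp only [Finset.sum_ite_eq', Finset.mem_univ, if_true]
  show Complex.I ^ ((x.val + 1) % (4 * k)) + Complex.I ^ ((x.val + (4 * k - 1)) % (4 * k)) = 0
  rw [key, key]
  have h3 : Complex.I ^ (4 * k - 1) * Complex.I = 1 := by
    rw [← pow_succ, Nat.sub_add_cancel hm, hI]
  have h4 : Complex.I ^ (4 * k - 1) = -Complex.I := by
    have := congrArg (· * Complex.I) h3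
    simp only [mul_assoc, Complex.I_mul_I, one_mul] at this
    linear_combination -this
  rw [pow_add, pow_add, h4, pow_one]; ring

/-- For m, n positive and divisible by 4, the Kasteleyn-weighted adjacency
matrix D_m^+ ⊗ I_n + i (I_m ⊗ D_n^+) of the m-by-n toroidal grid has
determinant zero. -/
theorem det_kronecker_cycle_eq_zero (m n : ℕ) (hm : 0 < m) (hn : 0 < n)
    (hm4 : 4 ∣ m) (hn4 : 4 ∣ n) :
    (cycleMatrix m ⊗ₖ (1 : Matrix (Fin n) (Fin n) ℂ) +
        Complex.I • ((1 : Matrix (Fin m) (Fin m) ℂ) ⊗ₖ cycleMatrix n)).det = 0 := by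
  rw [← Matrix.exists_mulVec_eq_zero_iff]
  refine ⟨fun p => Complex.I ^ p.1.val * Complex.I ^ p.2.val, ?_, ?_⟩
  · intro h
    have := congrFun h (⟨0, hm⟩, ⟨0, hn⟩)
    simp at this
  · ext ⟨a, b⟩
    have ha := cycle_mulVec_aux m hm hm4 a
    have hb := cycle_mulVec_aux n hn hn4 b
    have e : ∀ (c : Fin m) (d : Fin n),
        (cycleMatrix m ⊗ₖ (1 : Matrix (Fin n) (Fin n) ℂ) +
          Complex.I • ((1 : Matrix (Fin m) (Fin m) ℂ) ⊗ₖ cycleMatrix n)) (a, b) (c, d) *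
          (Complex.I ^ c.val * Complex.I ^ d.val) =
        (cycleMatrix m a c * Complex.I ^ c.val) *
            ((1 : Matrix (Fin n) (Fin n) ℂ) b d * Complex.I ^ d.val) +
          (Complex.I * ((1 : Matrix (Fin m) (Fin m) ℂ) a c * Complex.I ^ c.val)) *
            (cycleMatrix n b d * Complex.I ^ d.val) := by
      intro c d
      simp only [Matrix.add_apply, Matrix.smul_apply, Matrix.kroneckerMap_apply, smul_eq_mul]
      ring
    simp only [Matrix.mulVec, dotProduct, Fintype.sum_prod_type, Pi.zero_apply]
    rw [Finset.sum_congr rfl (fun c _ => Finset.sum_congr rfl (fun d _ => e c d))]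
    simp only [Finset.sum_add_distrib]
    rw [← Finset.sum_mul_sum, ← Finset.sum_mul_sum, ha, hb, zero_mul, mul_zero, add_zero]
end

section
/- Let f be a real-valued function of two positive-integer arguments such that (i) f is monotone nondecreasing in each argument, and (ii) f is subadditive in each argument, i.e., f(m₁ + m₂, n) ≤ f(m₁, n) + f(m₂, n) and f(m, n₁ + n₂) ≤ f(m, n₁) + f(m, n₂) for all positive integers m, m₁, m₂, n, n₁, n₂. Let α = sup over (m₀, n₀) of the infimum of f(m,n)/(mn) over all m ≥ m₀ and n ≥ n₀. Then f(m,n)/(mn) ≥ α for all positive integers m, n, and f(m,n)/(mn) converges to α as min(m,n) → ∞; in particular α equals the infimum of f(m,n)/(mn) over all positive integers m, n. -/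
theorem fekete_mul (g : ℕ+ → ℝ) (hs : ∀ a b, g (a + b) ≤ g a + g b) (k a : ℕ+) :
    g (k * a) ≤ (k : ℝ) * g a := by
  induction k using PNat.recOn with
  | one => simp
  | succ k ih =>
    have h := hs (k * a) a
    have e : (k + 1) * a = k * a + a := by rw [add_mul, one_mul]
    rw [e]
    push_cast
    linarith

theorem fekete_nonneg (g : ℕ+ → ℝ) (hm : ∀ a b, a ≤ b → g a ≤ g b)
    (hs : ∀ a b, g (a + b) ≤ g a + g b) (a : ℕ+) : 0 ≤ g a := by
  have h1 := hm a (a + a) (PNat.lt_add_right a a).le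
  have h2 := hs a a
  linarith

theorem fekete_one (g : ℕ+ → ℝ) (hm : ∀ a b, a ≤ b → g a ≤ g b)
    (hs : ∀ a b, g (a + b) ≤ g a + g b) (a N m : ℕ+) (h : a * N ≤ m) :
    g m / (m : ℝ) ≤ (1 + 1 / (N : ℝ)) * (g a / (a : ℝ)) := by
  have h0 := fekete_nonneg g hm hs a
  have ha : (0 : ℝ) < a := by exact_mod_cast a.pos
  have hN : (0 : ℝ) < N := by exact_mod_cast N.pos
  have hmp : (0 : ℝ) < m := by exact_mod_cast m.pos
  have h' : (a : ℝ) * N ≤ m := by exact_mod_cast h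
  let k : ℕ+ := Nat.succPNat ((m : ℕ) / a)
  have hk : m ≤ k * a := by
    rw [← PNat.coe_le_coe]
    simp only [k, PNat.mul_coe, Nat.succPNat_coe, Nat.succ_eq_add_one]
    have := Nat.lt_div_mul_add (a := (m : ℕ)) a.pos
    nlinarith
  have hk2 : (k : ℝ) * a ≤ m + a := by
    have h1 : (k : ℕ) * a ≤ m + a := by
      simp only [k, Nat.succPNat_coe, Nat.succ_eq_add_one]
      have := Nat.div_mul_le_self (m : ℕ) a
      nlinarith
    exact_mod_cast h1
  have h3 : g m ≤ k * g a := (hm _ _ hk).trans (fekete_mul g hs k a)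
  have h4 : (a : ℝ) ≤ m * (1 / N) := by
    rw [mul_one_div, le_div_iff₀ hN]; exact h'
  rw [div_le_iff₀ hmp]
  have h5 : (k : ℝ) * g a = (k * a) * (g a / a) := by field_simp
  have h6 : (0 : ℝ) ≤ g a / a := by positivity
  calc g m ≤ (k * a) * (g a / a) := by rw [← h5]; exact h3
    _ ≤ (m + m * (1 / N)) * (g a / a) := by gcongr; linarith
    _ = _ := by ring

/-- Two-dimensional Fekete lemma: if f, a real-valued function of two
positive-integer arguments, is monotone nondecreasing in each argument and
subadditive in each argument, and
α = sup_{m₀,n₀} inf_{m ≥ m₀, n ≥ n₀} f(m,n)/(mn), then f(m,n)/(mn) ≥ α for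
all m, n; f(m,n)/(mn) → α as min(m,n) → ∞; and α = inf_{m,n} f(m,n)/(mn). -/
theorem two_dim_fekete (f : ℕ+ → ℕ+ → ℝ)
    (hmono1 : ∀ m m' n : ℕ+, m ≤ m' → f m n ≤ f m' n)
    (hmono2 : ∀ m n n' : ℕ+, n ≤ n' → f m n ≤ f m n')
    (hsub1 : ∀ m₁ m₂ n : ℕ+, f (m₁ + m₂) n ≤ f m₁ n + f m₂ n)
    (hsub2 : ∀ m n₁ n₂ : ℕ+, f m (n₁ + n₂) ≤ f m n₁ + f m n₂)
    (α : ℝ)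
    (hα : α = ⨆ p : ℕ+ × ℕ+, ⨅ q : {q : ℕ+ × ℕ+ // p.1 ≤ q.1 ∧ p.2 ≤ q.2},
        f q.val.1 q.val.2 / ((q.val.1 : ℝ) * (q.val.2 : ℝ))) :
    (∀ m n : ℕ+, α ≤ f m n / ((m : ℝ) * (n : ℝ))) ∧
    (∀ ε > 0, ∃ m₀ n₀ : ℕ+, ∀ m n : ℕ+, m₀ ≤ m → n₀ ≤ n →
        |f m n / ((m : ℝ) * (n : ℝ)) - α| < ε) ∧
    α = ⨅ p : ℕ+ × ℕ+, f p.1 p.2 / ((p.1 : ℝ) * (p.2 : ℝ)) := by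
  have hnn : ∀ m n, 0 ≤ f m n := fun m n =>
    fekete_nonneg (fun x => f x n) (fun a b h => hmono1 a b n h) (fun a b => hsub1 a b n) m
  have hg : ∀ m n : ℕ+, 0 ≤ f m n / ((m : ℝ) * (n : ℝ)) := fun m n =>
    div_nonneg (hnn m n) (by positivity)
  have key : ∀ a b : ℕ+, ∀ ε > 0, ∃ m₀ n₀ : ℕ+, ∀ m n : ℕ+, m₀ ≤ m → n₀ ≤ n →
      f m n / ((m : ℝ) * (n : ℝ)) < f a b / ((a : ℝ) * (b : ℝ)) + ε := by
    intro a b ε hε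
    obtain ⟨N, hN⟩ := exists_nat_gt (3 * (f a b / ((a : ℝ) * (b : ℝ))) / ε)
    refine ⟨a * N.succPNat, b * N.succPNat, fun m n hm hn => ?_⟩
    have h1 := fekete_one (fun x => f x n) (fun a b h => hmono1 a b n h)
      (fun a b => hsub1 a b n) a _ m hm
    have h2 := fekete_one (fun x => f a x) (fun x y h => hmono2 a x y h)
      (fun x y => hsub2 a x y) b _ n hn
    have hG := hg a b
    simp only [Nat.succPNat_coe, Nat.succ_eq_add_one] at h1 h2
    have hn0 : (0 : ℝ) < n := by exact_mod_cast n.pos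
    have ha0 : (0 : ℝ) < a := by exact_mod_cast a.pos
    set G := f a b / ((a : ℝ) * (b : ℝ)) with hGd
    set t : ℝ := 1 / ((N + 1 : ℕ) : ℝ) with ht
    have hNp : (0 : ℝ) < ((N + 1 : ℕ) : ℝ) := by positivity
    have ht0 : 0 ≤ t := by positivity
    have ht1 : t ≤ 1 := by
      rw [ht, div_le_one hNp]; push_cast; linarith [Nat.cast_nonneg (α := ℝ) N]
    have h3 : 3 * G * t < ε := by
      rw [div_lt_iff₀ hε] at hN
      rw [ht, mul_one_div, div_lt_iff₀ hNp]
      push_cast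
      nlinarith
    have h4 : f m n / ((m : ℝ) * n) ≤ (1 + t) * ((1 + t) * G) := by
      calc f m n / ((m : ℝ) * n) = f m n / m / n := by rw [div_div]
        _ ≤ (1 + t) * (f a n / a) / n := by gcongr
        _ = (1 + t) * ((f a n / n) / a) := by ring
        _ ≤ (1 + t) * (((1 + t) * (f a b / b)) / a) := by gcongr
        _ = (1 + t) * ((1 + t) * G) := by rw [hGd, mul_comm (a : ℝ), ← div_div]; ring
    have h5 : G * (t * t) ≤ G * t := by
      apply mul_le_mul_of_nonneg_left _ hG
      nlinarith
    nlinarith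
  have hbdd : BddBelow (Set.range fun p : ℕ+ × ℕ+ => f p.1 p.2 / ((p.1 : ℝ) * (p.2 : ℝ))) :=
    ⟨0, by rintro _ ⟨p, rfl⟩; exact hg _ _⟩
  have hI : ∀ p : ℕ+ × ℕ+, (⨅ q : {q : ℕ+ × ℕ+ // p.1 ≤ q.1 ∧ p.2 ≤ q.2},
        f q.val.1 q.val.2 / ((q.val.1 : ℝ) * (q.val.2 : ℝ))) =
      ⨅ p : ℕ+ × ℕ+, f p.1 p.2 / ((p.1 : ℝ) * (p.2 : ℝ)) := by
    intro p
    haveI : Nonempty {q : ℕ+ × ℕ+ // p.1 ≤ q.1 ∧ p.2 ≤ q.2} := ⟨⟨p, le_rfl, le_rfl⟩⟩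
    apply le_antisymm
    · refine le_ciInf fun r => le_of_forall_pos_le_add fun ε hε => ?_
      obtain ⟨m₀, n₀, h⟩ := key r.1 r.2 ε hε
      have hb : BddBelow (Set.range fun q : {q : ℕ+ × ℕ+ // p.1 ≤ q.1 ∧ p.2 ≤ q.2} =>
          f q.val.1 q.val.2 / ((q.val.1 : ℝ) * (q.val.2 : ℝ))) :=
        ⟨0, by rintro _ ⟨p, rfl⟩; exact hg _ _⟩
      exact (ciInf_le hb ⟨(max m₀ p.1, max n₀ p.2), le_max_right _ _, le_max_right _ _⟩).trans
        (h _ _ (le_max_left _ _) (le_max_left _ _)).le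
    · exact le_ciInf fun q => ciInf_le hbdd q.val
  have hβ : α = ⨅ p : ℕ+ × ℕ+, f p.1 p.2 / ((p.1 : ℝ) * (p.2 : ℝ)) := by
    rw [hα, iSup_congr hI, ciSup_const]
  have hlow : ∀ m n : ℕ+, α ≤ f m n / ((m : ℝ) * (n : ℝ)) := fun m n => by
    rw [hβ]; exact ciInf_le hbdd (m, n)
  refine ⟨hlow, fun ε hε => ?_, hβ⟩
  obtain ⟨r, hr⟩ := exists_lt_of_ciInf_lt (show (⨅ p : ℕ+ × ℕ+,
    f p.1 p.2 / ((p.1 : ℝ) * (p.2 : ℝ))) < α + ε / 2 by rw [← hβ]; linarith)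
  obtain ⟨m₀, n₀, h⟩ := key r.1 r.2 (ε / 2) (by linarith)
  refine ⟨m₀, n₀, fun m n hm hn => ?_⟩
  have h1 := h m n hm hn
  have h2 := hlow m n
  rw [abs_lt]
  constructor <;> linarith
end
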